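/- There are exactly 3 isomorphism classes of pointed stable fatgraphs of genus zero of type (1,1,1,1; 1), i.e. with four marked faces of degree 1 each and one label: |F_{0,5}(1,1,1,1,0)| = 3. -/

import Mathlib

/-!
Four faces of degree 1 exhaust the four darts, so the face permutation `σ * α` is the identity.
Since `α` is an involution this forces `σ = α`: every component is a single edge closed up to a
loop at a bivalent vertex, and the vertices correspond to the components.  Consequently any chain
of merges only ever uses the relation `∼`, so connectedness makes `∼` total; there is then one
class, the label has no choice, and stability is vacuous.  What remains is `α` itself, transported
along the face marking to a fixed-point-free involution of `Fin 4`.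

`Fatgraph.matching` is this involution.  It is invariant under isomorphism
(`matching_eq_of_iso`), it determines the isomorphism class (`iso_of_matching_eq`), and every
fixed-point-free involution arises (`ofMatching`, `matching_ofMatching`).  So the isomorphism
classes are counted by the perfect matchings of four points, of which there are three.
-/

open Equiv


def cycleSetoid {D : Type*} (σ : Equiv.Perm D) : Setoid D where
  r := σ.SameCycle
  iseqv := ⟨fun x => Equiv.Perm.SameCycle.refl σ x,
    fun h => h.symm, fun h h' => h.trans h'⟩

def reaches {D : Type*} (σ α : Equiv.Perm D) (x y : D) : Prop :=
  ∃ g ∈ Subgroup.closure ({σ, α} : Set (Equiv.Perm D)), g x = y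

/-- A pointed stable fatgraph of genus zero, with marked faces indexed by `I`
(of degrees `d`) and labels indexed by `J`. -/
structure Fatgraph (I J : Type*) [Fintype I] [Fintype J] (d : I → ℕ) where
  σ : Equiv.Perm (Fin (∑ i, d i))
  α : Equiv.Perm (Fin (∑ i, d i))
  α_invol : α * α = 1
  α_fpf : ∀ x, α x ≠ x
  /-- every connected component has Euler characteristic 2 -/
  genus0 : ∀ x : Fin (∑ i, d i),
    (Nat.card {v : Quotient (cycleSetoid σ) //
        ∃ y, reaches σ α x y ∧ Quotient.mk (cycleSetoid σ) y = v} : ℤ)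
    - (Nat.card {v : Quotient (cycleSetoid α) //
        ∃ y, reaches σ α x y ∧ Quotient.mk (cycleSetoid α) y = v} : ℤ)
    + (Nat.card {v : Quotient (cycleSetoid (σ * α)) //
        ∃ y, reaches σ α x y ∧ Quotient.mk (cycleSetoid (σ * α)) y = v} : ℤ) = 2
  /-- the marking of the faces -/
  F : I → Quotient (cycleSetoid (σ * α))
  F_bij : Function.Bijective F
  F_deg : ∀ i, Nat.card {x // Quotient.mk (cycleSetoid (σ * α)) x = F i} = d i
  /-- the equivalence relation on vertices -/
  E : Setoid (Quotient (cycleSetoid σ))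
  /-- each class has at most one vertex in each connected component -/
  E_classComp : ∀ v w, E.r v w →
    (∃ x y, Quotient.mk (cycleSetoid σ) x = v ∧ Quotient.mk (cycleSetoid σ) y = w ∧
      reaches σ α x y) → v = w
  /-- merging components along the equivalence classes yields a single block -/
  E_conn : ∀ v w : Quotient (cycleSetoid σ),
    Relation.ReflTransGen (fun a b => E.r a b ∨
      ∃ x y, Quotient.mk (cycleSetoid σ) x = a ∧ Quotient.mk (cycleSetoid σ) y = b ∧
        reaches σ α x y) v w
  /-- (#components) - 1 = Σ over classes C of (|C| - 1), i.e. a tree -/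
  E_tree : (Nat.card (Quot (reaches σ α)) : ℤ) - 1
    = (Nat.card (Quotient (cycleSetoid σ)) : ℤ) - (Nat.card (Quotient E) : ℤ)
  /-- the label assignment -/
  L : J → Quotient E
  /-- stability: every vertex of valency 1 lies in a class with at least two elements
  or in the image of `L` -/
  stable : ∀ v : Quotient (cycleSetoid σ),
    Nat.card {x // Quotient.mk (cycleSetoid σ) x = v} = 1 →
    (2 ≤ Nat.card {w // E.r v w} ∨ ∃ j, L j = Quotient.mk E v)

/-- Isomorphism of pointed stable fatgraphs: a bijection of darts intertwining the
permutations and involutions and preserving face marking, equivalence relation and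
label assignment. -/
def Fatgraph.Iso {I J : Type*} [Fintype I] [Fintype J] {d : I → ℕ}
    (G G' : Fatgraph I J d) : Prop :=
  ∃ e : Equiv.Perm (Fin (∑ i, d i)),
    (∀ x, e (G.σ x) = G'.σ (e x)) ∧
    (∀ x, e (G.α x) = G'.α (e x)) ∧
    (∀ i x, G.F i = Quotient.mk (cycleSetoid (G.σ * G.α)) x →
      G'.F i = Quotient.mk (cycleSetoid (G'.σ * G'.α)) (e x)) ∧
    (∀ x y, G.E.r (Quotient.mk (cycleSetoid G.σ) x) (Quotient.mk (cycleSetoid G.σ) y) ↔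
      G'.E.r (Quotient.mk (cycleSetoid G'.σ) (e x)) (Quotient.mk (cycleSetoid G'.σ) (e y))) ∧
    (∀ j x, G.L j = Quotient.mk G.E (Quotient.mk (cycleSetoid G.σ) x) →
      G'.L j = Quotient.mk G'.E (Quotient.mk (cycleSetoid G'.σ) (e x)))

/-- The number of isomorphism classes of pointed stable fatgraphs of genus zero
with marked faces indexed by `I` of degrees `d` and labels indexed by `J`. -/
noncomputable def FCount (I J : Type*) [Fintype I] [Fintype J] (d : I → ℕ) : ℕ :=
  Nat.card (Quot (@Fatgraph.Iso I J _ _ d))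


/-- Fatgraphs with four marked faces of degree 1 and one label. -/
abbrev FG := Fatgraph (Fin 4) (Fin 1) ![1, 1, 1, 1]

/-- The set of darts. -/
abbrev Dart := Fin (∑ i, (![1, 1, 1, 1] : Fin 4 → ℕ) i)

/-- The perfect matchings of four points, as fixed-point-free involutions. -/
abbrev Matching := {β : Equiv.Perm (Fin 4) // β * β = 1 ∧ ∀ x, β x ≠ x}

theorem reaches_self_iff {D : Type*} (τ : Equiv.Perm D) (x y : D) :
    reaches τ τ x y ↔ τ.SameCycle x y := by
  unfold reaches
  rw [Set.pair_eq_singleton]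
  constructor
  · rintro ⟨g, hg, rfl⟩
    obtain ⟨k, rfl⟩ := Subgroup.mem_closure_singleton.1 hg
    exact ⟨k, rfl⟩
  · rintro ⟨k, rfl⟩
    exact ⟨τ ^ k, Subgroup.mem_closure_singleton.2 ⟨k, rfl⟩, rfl⟩

/-- The cycle through `x` of an involution is `{x, τ x}`. -/
theorem sameCycle_invol_iff {D : Type*} (τ : Equiv.Perm D) (h : τ * τ = 1) (x y : D) :
    τ.SameCycle x y ↔ y = x ∨ y = τ x := by
  constructor
  · rintro ⟨k, rfl⟩
    have h2 : τ ^ (2 : ℤ) = 1 := by rw [zpow_two, h]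
    rcases Int.even_or_odd' k with ⟨m, rfl | rfl⟩
    · left; simp [zpow_mul, h2]
    · right; simp [zpow_add, zpow_mul, h2]
  · rintro (rfl | rfl)
    · exact Equiv.Perm.SameCycle.refl _ _
    · exact ⟨1, by simp⟩

theorem mk_eq_iff {D : Type*} (σ : Equiv.Perm D) (x y : D) :
    Quotient.mk (cycleSetoid σ) x = Quotient.mk (cycleSetoid σ) y ↔ σ.SameCycle x y :=
  ⟨fun h => Quotient.exact h, fun h => Quotient.sound h⟩

theorem mk_injective_of_eq_one {D : Type*} {σ : Equiv.Perm D} (h : σ = 1) :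
    Function.Injective (Quotient.mk (cycleSetoid σ)) := by
  intro x y hxy
  rw [mk_eq_iff] at hxy
  subst h
  simpa using hxy

namespace Fatgraph

/-! ### Structure of such a fatgraph -/

theorem phi_eq_one (G : FG) : G.σ * G.α = 1 := by
  ext1 x
  obtain ⟨i, hi⟩ := G.F_bij.2 (Quotient.mk _ x)
  have hd := G.F_deg i
  have h1 : (![1, 1, 1, 1] : Fin 4 → ℕ) i = 1 := by fin_cases i <;> rfl
  rw [h1, Nat.card_eq_one_iff_unique] at hd
  have hx : Quotient.mk (cycleSetoid (G.σ * G.α)) ((G.σ * G.α) x) = G.F i := by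
    rw [hi, mk_eq_iff]
    exact (Equiv.Perm.SameCycle.refl _ x).apply_left
  have := hd.1.elim ⟨(G.σ * G.α) x, hx⟩ ⟨x, hi.symm⟩
  simpa using congrArg Subtype.val this

theorem sigma_eq_alpha (G : FG) : G.σ = G.α := by
  have h := G.phi_eq_one
  rw [← G.α_invol] at h
  exact mul_right_cancel h

/-- A component has only one vertex, so chains of merges stay inside one `∼`-class. -/
theorem E_total (G : FG) (v w : Quotient (cycleSetoid G.σ)) : G.E.r v w := by
  have h := G.E_conn v w
  induction h with
  | refl => exact G.E.iseqv.refl _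
  | tail _ hbc ih =>
    refine G.E.iseqv.trans ih ?_
    rcases hbc with h | ⟨x, y, rfl, rfl, hxy⟩
    · exact h
    · rw [← G.sigma_eq_alpha, reaches_self_iff, ← mk_eq_iff] at hxy
      rw [hxy]

theorem class_eq (G : FG) (a b : Quotient G.E) : a = b := by
  induction a using Quotient.inductionOn
  induction b using Quotient.inductionOn
  exact Quotient.sound (G.E_total _ _)

/-- The marking of the faces, read as a numbering of the darts (each face is one dart). -/
noncomputable def dart (G : FG) : Fin 4 ≃ Dart :=
  (Equiv.ofBijective G.F G.F_bij).trans
    (Equiv.ofBijective (Quotient.mk (cycleSetoid (G.σ * G.α)))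
      ⟨mk_injective_of_eq_one G.phi_eq_one, Quotient.mk_surjective⟩).symm

theorem mk_dart (G : FG) (i : Fin 4) :
    Quotient.mk (cycleSetoid (G.σ * G.α)) (G.dart i) = G.F i :=
  Equiv.ofBijective_apply_symm_apply (Quotient.mk (cycleSetoid (G.σ * G.α)))
    ⟨mk_injective_of_eq_one G.phi_eq_one, Quotient.mk_surjective⟩ (G.F i)

theorem F_eq_mk_iff (G : FG) (i : Fin 4) (x : Dart) :
    G.F i = Quotient.mk (cycleSetoid (G.σ * G.α)) x ↔ G.dart i = x := by
  rw [← mk_dart]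
  exact (mk_injective_of_eq_one G.phi_eq_one).eq_iff

/-- The involution `α` transported to the face labels: `i` and `matching i` are the two sides of
one edge. -/
noncomputable def matching (G : FG) : Matching :=
  ⟨G.dart.symm.permCongr G.α, by
    ext1 i
    have := Equiv.congr_fun G.α_invol (G.dart i)
    simp only [Equiv.Perm.mul_apply, Equiv.Perm.one_apply] at this
    simp [Equiv.permCongr_apply, this], by
    intro i hi
    rw [Equiv.permCongr_apply, Equiv.symm_symm, Equiv.symm_apply_eq] at hi
    exact G.α_fpf _ hi⟩

theorem dart_matching (G : FG) (i : Fin 4) : G.dart (G.matching.1 i) = G.α (G.dart i) := by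
  simp [matching, Equiv.permCongr_apply]

/-! ### The matching classifies -/

theorem matching_eq_of_iso {G G' : FG} (h : G.Iso G') : G.matching = G'.matching := by
  obtain ⟨e, -, hα, hF, -, -⟩ := h
  have hd : ∀ i, G'.dart i = e (G.dart i) := fun i =>
    (G'.F_eq_mk_iff i _).1 (hF i _ (G.mk_dart i).symm)
  ext1
  ext1 i
  apply G'.dart.injective
  rw [hd, dart_matching, dart_matching, hα, hd]

theorem iso_of_matching_eq {G G' : FG} (h : G.matching = G'.matching) : G.Iso G' := by
  have hα : ∀ x, (G.dart.symm.trans G'.dart) (G.α x) = G'.α ((G.dart.symm.trans G'.dart) x) := by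
    intro x
    obtain ⟨i, rfl⟩ := G.dart.surjective x
    rw [← dart_matching]
    simp [← dart_matching, h]
  refine ⟨G.dart.symm.trans G'.dart, ?_, hα, ?_, ?_, ?_⟩
  · intro x
    rw [G.sigma_eq_alpha, G'.sigma_eq_alpha, hα]
  · intro i x hx
    rw [F_eq_mk_iff] at hx ⊢
    simp [← hx]
  · exact fun x y => iff_of_true (G.E_total _ _) (G'.E_total _ _)
  · exact fun j x _ => G'.class_eq _ _

/-! ### Realizing every matching -/

/-- The standard numbering of the darts. -/
def stdDart : Fin 4 ≃ Dart := finCongr (by decide)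

/-- The fatgraph with `σ = α` a given fixed-point-free involution of the darts, the faces marked
by the standard numbering, and all vertices `∼`-equivalent. -/
def ofInvol (τ : Equiv.Perm Dart) (h : τ * τ = 1) (hf : ∀ x, τ x ≠ x) : FG where
  σ := τ
  α := τ
  α_invol := h
  α_fpf := hf
  genus0 x := by
    have h1 : Nat.card {v : Quotient (cycleSetoid τ) //
        ∃ y, reaches τ τ x y ∧ Quotient.mk (cycleSetoid τ) y = v} = 1 := by
      rw [Nat.card_eq_one_iff_unique]
      refine ⟨⟨?_⟩, ⟨⟨_, x, (reaches_self_iff _ _ _).2 (.refl _ _), rfl⟩⟩⟩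
      rintro ⟨_, y, hy, rfl⟩ ⟨_, z, hz, rfl⟩
      rw [reaches_self_iff] at hy hz
      exact Subtype.ext ((mk_eq_iff _ _ _).2 (hy.symm.trans hz))
    -- The faces of the component are its two darts `x` and `τ x`.
    have h2 : Nat.card {v : Quotient (cycleSetoid (τ * τ)) //
        ∃ y, reaches τ τ x y ∧ Quotient.mk (cycleSetoid (τ * τ)) y = v} = 2 := by
      have hs : {v : Quotient (cycleSetoid (τ * τ)) |
          ∃ y, reaches τ τ x y ∧ Quotient.mk (cycleSetoid (τ * τ)) y = v} =
          {Quotient.mk _ x, Quotient.mk _ (τ x)} := by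
        ext v
        simp only [reaches_self_iff, sameCycle_invol_iff τ h, Set.mem_ofPred_eq,
          Set.mem_insert_iff, Set.mem_singleton_iff]
        constructor
        · rintro ⟨y, rfl | rfl, rfl⟩ <;> simp
        · rintro (rfl | rfl)
          · exact ⟨x, .inl rfl, rfl⟩
          · exact ⟨τ x, .inr rfl, rfl⟩
      have hne : Quotient.mk (cycleSetoid (τ * τ)) x ≠ Quotient.mk _ (τ x) :=
        fun he => hf x (mk_injective_of_eq_one h he).symm
      rw [← Set.ncard_pair hne, ← hs]
      rfl
    rw [h1, h2]
    norm_num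
  F i := Quotient.mk _ (stdDart i)
  F_bij := ⟨(mk_injective_of_eq_one h).comp stdDart.injective,
    Quotient.mk_surjective.comp stdDart.surjective⟩
  F_deg i := by
    have h1 : (![1, 1, 1, 1] : Fin 4 → ℕ) i = 1 := by fin_cases i <;> rfl
    rw [h1, Nat.card_eq_one_iff_unique]
    exact ⟨⟨fun a b => Subtype.ext (mk_injective_of_eq_one h (a.2.trans b.2.symm))⟩,
      ⟨⟨stdDart i, rfl⟩⟩⟩
  E := ⊤
  E_classComp := by
    rintro _ _ - ⟨x, y, rfl, rfl, hxy⟩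
    rwa [reaches_self_iff, ← mk_eq_iff] at hxy
  E_conn v w := .single (.inl trivial)
  E_tree := by
    have h1 : Nat.card (Quotient (⊤ : Setoid (Quotient (cycleSetoid τ)))) = 1 := by
      rw [Nat.card_eq_one_iff_unique]
      refine ⟨⟨fun a b => ?_⟩, ⟨Quotient.mk _ (Quotient.mk _ (stdDart 0))⟩⟩
      induction a using Quotient.inductionOn
      induction b using Quotient.inductionOn
      exact Quotient.sound trivial
    have h2 : Nat.card (Quot (reaches τ τ)) = Nat.card (Quotient (cycleSetoid τ)) :=
      Nat.card_congr (Quot.congrRight (reaches_self_iff τ))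
    rw [h1, h2]
    simp
  L _ := Quotient.mk _ (Quotient.mk _ (stdDart 0))
  stable v _ := .inr ⟨0, Quotient.sound trivial⟩

/-- The fatgraph realizing a given perfect matching of the face labels. -/
def ofMatching (β : Matching) : FG :=
  ofInvol (stdDart.permCongr β.1)
    (by
      ext1 x
      have := Equiv.congr_fun β.2.1 (stdDart.symm x)
      simp only [Equiv.Perm.mul_apply, Equiv.Perm.one_apply] at this
      simp [Equiv.permCongr_apply, this])
    (by
      intro x hx
      rw [Equiv.permCongr_apply, ← Equiv.eq_symm_apply] at hx
      exact β.2.2 _ hx)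

theorem matching_ofMatching (β : Matching) : (ofMatching β).matching = β := by
  have hd : ∀ i, (ofMatching β).dart i = stdDart i := fun i =>
    ((ofMatching β).F_eq_mk_iff i _).1 rfl
  ext1
  ext1 i
  apply stdDart.injective
  rw [← hd, dart_matching, hd]
  change stdDart.permCongr β.1 (stdDart i) = _
  simp [Equiv.permCongr_apply]

end Fatgraph

theorem card_matching : Nat.card Matching = 3 := by
  rw [Nat.card_eq_fintype_card]
  decide

/-- There are exactly 3 pointed stable fatgraphs of genus zero with four marked faces
of degree 1 each and one label. -/
theorem count_F05_explicit : FCount (Fin 4) (Fin 1) ![1, 1, 1, 1] = 3 := by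
  refine Eq.trans ?_ card_matching
  refine Nat.card_congr (Equiv.ofBijective
    (Quot.lift Fatgraph.matching fun _ _ => Fatgraph.matching_eq_of_iso) ⟨?_, ?_⟩)
  · rintro ⟨G⟩ ⟨G'⟩ h
    exact Quot.sound (Fatgraph.iso_of_matching_eq h)
  · exact fun β => ⟨Quot.mk _ (Fatgraph.ofMatching β), Fatgraph.matching_ofMatching β⟩
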